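/- arXiv:1305.1503 — 4 statements merged into one kernel-verified Lean document; each statement's English description precedes it below -/
import Mathlib

section
/- Let R be a commutative ring, let J ⊆ R be an arbitrary subset, and let √J denote the radical of the ideal generated by J. Then Loc({R_f : f ∈ J}) = Loc({R_f : f ∈ √J}) in D(R). -/
open CategoryTheory CategoryTheory.Limits CategoryTheory.Pretriangulated ZeroObject

universe w w' v u

section TriangulatedDefs

variable {T : Type u} [Category.{v} T] [Preadditive T] [HasZeroObject T]
  [HasShift T ℤ] [∀ n : ℤ, (shiftFunctor T n).Additive] [Pretriangulated T]

/-- A localizing subcategory of a (pre)triangulated category, encoded as a set of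
objects: it is closed under isomorphisms, contains the zero object, is stable
under shifts, closed under cones of distinguished triangles (hence a full
triangulated subcategory), and closed under arbitrary small coproducts
(phrased via colimit cofans, so that no global existence of coproducts
is needed). -/
structure IsLocalizingSub (S : Set T) : Prop where
  zero_mem : (0 : T) ∈ S
  mem_of_iso : ∀ {x y : T}, (x ≅ y) → x ∈ S → y ∈ S
  shift_mem : ∀ (n : ℤ) {x : T}, x ∈ S → x⟦n⟧ ∈ S
  cone_mem : ∀ (Tr : Triangle T), Tr ∈ distinguishedTriangles →
    Tr.obj₁ ∈ S → Tr.obj₂ ∈ S → Tr.obj₃ ∈ S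
  coprod_mem : ∀ {ι : Type w} (f : ι → T) (c : Cofan f), IsColimit c →
    (∀ i, f i ∈ S) → c.pt ∈ S

/-- A colocalizing subcategory: as `IsLocalizingSub` but with products instead
of coproducts. -/
structure IsColocalizingSub (S : Set T) : Prop where
  zero_mem : (0 : T) ∈ S
  mem_of_iso : ∀ {x y : T}, (x ≅ y) → x ∈ S → y ∈ S
  shift_mem : ∀ (n : ℤ) {x : T}, x ∈ S → x⟦n⟧ ∈ S
  cone_mem : ∀ (Tr : Triangle T), Tr ∈ distinguishedTriangles →
    Tr.obj₁ ∈ S → Tr.obj₂ ∈ S → Tr.obj₃ ∈ S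
  prod_mem : ∀ {ι : Type w} (f : ι → T) (c : Fan f), IsLimit c →
    (∀ i, f i ∈ S) → c.pt ∈ S

/-- `Loc S`: the smallest localizing subcategory containing the set of
objects `S` (the intersection of all localizing subcategories containing it). -/
def Loc (S : Set T) : Set T :=
  ⋂₀ {L : Set T | IsLocalizingSub.{w} L ∧ S ⊆ L}

/-- The right orthogonal of a set of objects. -/
def rightOrth (C : Set T) : Set T :=
  {x : T | ∀ ⦃c : T⦄, c ∈ C → ∀ (g : c ⟶ x), g = 0}

end TriangulatedDefs

section CompactDefs

variable {T : Type u} [Category.{v} T] [Preadditive T]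

/-- The canonical comparison map `⨁ᵢ Hom(x, fᵢ) →+ Hom(x, ∐ f)` associated to a
cofan `c` on a family `f`. -/
noncomputable def cofanHomComparison {ι : Type w} (x : T) (f : ι → T) (c : Cofan f) :
    (Π₀ i, (x ⟶ f i)) →+ (x ⟶ c.pt) :=
  letI := Classical.decEq ι
  DFinsupp.sumAddHom (fun i => AddMonoidHom.mk' (fun φ => φ ≫ c.inj i)
    (fun φ ψ => Preadditive.add_comp _ _ _ φ ψ (c.inj i)))

/-- An object `x` is compact if `Hom(x, -)` commutes with arbitrary small
coproducts, i.e. for every colimit cofan on a family `f`, the canonical map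
`⨁ᵢ Hom(x, fᵢ) → Hom(x, ∐ f)` is bijective. -/
def IsCompactObj (x : T) : Prop :=
  ∀ ⦃ι : Type w⦄ (f : ι → T) (c : Cofan f), IsColimit c →
    Function.Bijective (cofanHomComparison x f c)

end CompactDefs

section DR

variable (R : Type u) [CommRing R] [HasDerivedCategory.{w'} (ModuleCat.{u} R)]

/-- The `R`-module `M`, regarded as an object of the derived category `D(R)`,
as a complex concentrated in degree `0`. -/
noncomputable def smod (M : ModuleCat.{u} R) : DerivedCategory (ModuleCat.{u} R) :=
  (DerivedCategory.singleFunctor (ModuleCat.{u} R) 0).obj M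

end DR

section FinsuppFunctor

variable (R : Type u) [CommRing R] (ι : Type u)

/-- The functor `X ↦ X^(ι)`. -/
noncomputable def sumF : ModuleCat.{u} R ⥤ ModuleCat.{u} R where
  obj X := ModuleCat.of R (ι →₀ X)
  map f := ModuleCat.ofHom (Finsupp.mapRange.linearMap f.hom)
  map_id X := by
    ext : 1
    exact Finsupp.mapRange.linearMap_id
  map_comp f g := by
    ext : 1
    exact Finsupp.mapRange.linearMap_comp _ _

instance : (sumF R ι).Additive where
  map_add {X Y f g} := by
    ext : 1
    exact LinearMap.ext fun x => Finsupp.ext fun i => rfl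

/-- The `i`-th inclusion. -/
noncomputable def sumIncl (i : ι) (X : ModuleCat.{u} R) : X ⟶ (sumF R ι).obj X :=
  ModuleCat.ofHom (Finsupp.lsingle i)

lemma sumIncl_naturality (i : ι) {X Y : ModuleCat.{u} R} (f : X ⟶ Y) :
    sumIncl R ι i X ≫ (sumF R ι).map f = f ≫ sumIncl R ι i Y := by
  ext x : 2
  exact Finsupp.mapRange_single (hf := map_zero f.hom)

/-- Descent. -/
noncomputable def sumDesc {X Y : ModuleCat.{u} R} (f : ι → (X ⟶ Y)) : (sumF R ι).obj X ⟶ Y :=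
  ModuleCat.ofHom (Finsupp.lsum ℕ (fun i => (f i).hom))

lemma sumIncl_desc {X Y : ModuleCat.{u} R} (f : ι → (X ⟶ Y)) (i : ι) :
    sumIncl R ι i X ≫ sumDesc R ι f = f i := by
  ext x : 2
  exact Finsupp.lsum_single ℕ (fun i => (f i).hom) i x

lemma sum_hom_ext {X Y : ModuleCat.{u} R} {f g : (sumF R ι).obj X ⟶ Y}
    (h : ∀ i, sumIncl R ι i X ≫ f = sumIncl R ι i X ≫ g) : f = g := by
  ext : 1
  refine Finsupp.lhom_ext fun i x => ?_
  exact ConcreteCategory.congr_hom (h i) x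

lemma sum_exact {X Y Z : ModuleCat.{u} R} (f : X ⟶ Y) (g : Y ⟶ Z)
    (hS : Function.Exact f g) (y : ι →₀ Y) :
    Finsupp.mapRange.linearMap g.hom y = 0 ↔
      y ∈ Set.range (Finsupp.mapRange.linearMap (α := ι) f.hom) := by
  constructor
  · intro hy
    choose! p hp using fun z => (hS z).1
    have hy' : ∀ i, g (y i) = 0 := fun i => DFunLike.congr_fun hy i
    classical
    refine ⟨Finsupp.onFinset y.support (fun i => if y i = 0 then 0 else p (y i)) ?_, ?_⟩
    · intro i hi
      by_contra h
      simp at h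
      simp [h] at hi
    · refine Finsupp.ext fun i => ?_
      change f (if y i = 0 then 0 else p (y i)) = y i
      split_ifs with h
      · simp [h]
      · exact hp _ (hy' i)
  · rintro ⟨x, rfl⟩
    refine Finsupp.ext fun i => ?_
    exact (hS _).2 ⟨_, rfl⟩

instance : (sumF R ι).PreservesHomology := by
  refine ((sumF R ι).exact_tfae.out 1 2).1 fun S hS => ?_
  rw [ShortComplex.ShortExact.moduleCat_exact_iff_function_exact] at hS ⊢
  intro y
  exact sum_exact R ι S.f S.g hS y

instance (X : ModuleCat.{u} R) [Projective X] : Projective ((sumF R ι).obj X) where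
  factors {E Y} f e _ := by
    refine ⟨sumDesc R ι fun i => Projective.factorThru (sumIncl R ι i X ≫ f) e, ?_⟩
    refine sum_hom_ext R ι fun i => ?_
    rw [← Category.assoc, sumIncl_desc, Projective.factorThru_comp]

/-- Complex level functor. -/
noncomputable abbrev sumFC :
    CochainComplex (ModuleCat.{u} R) ℤ ⥤ CochainComplex (ModuleCat.{u} R) ℤ :=
  (sumF R ι).mapHomologicalComplex (ComplexShape.up ℤ)

section

variable {K L : CochainComplex (ModuleCat.{u} R) ℤ}

/-- Degreewise inclusion. -/
noncomputable def inclX (i : ι) (K : CochainComplex (ModuleCat.{u} R) ℤ) (n : ℤ) :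
    K.X n ⟶ ((sumFC R ι).obj K).X n := sumIncl R ι i (K.X n)

/-- Degreewise descent. -/
noncomputable def descX {n : ℤ} {Y : ModuleCat.{u} R} (f : ι → (K.X n ⟶ Y)) :
    ((sumFC R ι).obj K).X n ⟶ Y := sumDesc R ι f

lemma inclX_descX {n : ℤ} {Y : ModuleCat.{u} R} (f : ι → (K.X n ⟶ Y)) (i : ι) :
    inclX R ι i K n ≫ descX R ι f = f i := sumIncl_desc R ι f i

lemma inclX_d (i : ι) (n m : ℤ) : inclX R ι i K n ≫ ((sumFC R ι).obj K).d n m =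
    K.d n m ≫ inclX R ι i K m := sumIncl_naturality R ι i _

lemma inclX_map (i : ι) (n : ℤ) (f : K ⟶ L) : inclX R ι i K n ≫ ((sumFC R ι).map f).f n =
    f.f n ≫ inclX R ι i L n := sumIncl_naturality R ι i _

lemma X_hom_ext {n : ℤ} {Y : ModuleCat.{u} R} {f g : ((sumFC R ι).obj K).X n ⟶ Y}
    (h : ∀ i, inclX R ι i K n ≫ f = inclX R ι i K n ≫ g) : f = g :=
  sum_hom_ext R ι h

/-- Complex level inclusion. -/
noncomputable def sumInclC (i : ι) (K : CochainComplex (ModuleCat.{u} R) ℤ) :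
    K ⟶ (sumFC R ι).obj K where
  f n := inclX R ι i K n
  comm' n m _ := inclX_d R ι i n m

/-- Complex level descent. -/
noncomputable def sumDescC (f : ι → (K ⟶ L)) :
    (sumFC R ι).obj K ⟶ L where
  f n := descX R ι fun i => (f i).f n
  comm' n m _ := by
    refine X_hom_ext R ι fun i => ?_
    rw [← Category.assoc, inclX_descX, ← Category.assoc, inclX_d, Category.assoc, inclX_descX,
      (f i).comm]

lemma sumInclC_desc (f : ι → (K ⟶ L)) (i : ι) :
    sumInclC R ι i K ≫ sumDescC R ι f = f i := by
  ext n : 1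
  exact inclX_descX R ι _ i

lemma sumInclC_naturality (f : K ⟶ L) (i : ι) :
    sumInclC R ι i K ≫ (sumFC R ι).map f = f ≫ sumInclC R ι i L := by
  ext n : 1
  exact inclX_map R ι i n f

lemma sum_homotopy (g : (sumFC R ι).obj K ⟶ L)
    (h : ∀ i, Homotopy (sumInclC R ι i K ≫ g) 0) : Nonempty (Homotopy g 0) := by
  refine ⟨{ hom := fun n m => descX R ι fun i => (h i).hom n m, zero := ?_, comm := ?_ }⟩
  · intro n m hnm
    refine X_hom_ext R ι fun i => ?_
    rw [inclX_descX, (h i).zero n m hnm, comp_zero]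
  · intro n
    refine X_hom_ext R ι fun i => ?_
    have h1 := (h i).comm n
    rw [dNext_eq (h i).hom (show (ComplexShape.up ℤ).Rel n (n+1) by simp),
      prevD_eq (h i).hom (show (ComplexShape.up ℤ).Rel (n-1) n by simp)] at h1
    rw [dNext_eq _ (show (ComplexShape.up ℤ).Rel n (n+1) by simp),
      prevD_eq _ (show (ComplexShape.up ℤ).Rel (n-1) n by simp)]
    rw [HomologicalComplex.zero_f, add_zero, Preadditive.comp_add, ← Category.assoc, inclX_d,
      Category.assoc, inclX_descX, ← Category.assoc _ _ (L.d _ _), inclX_descX]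
    rw [HomologicalComplex.zero_f, add_zero] at h1
    exact h1

end

variable [HasDerivedCategory.{w'} (ModuleCat.{u} R)]

open DerivedCategory

lemma kproj_Q_surj {K L : CochainComplex (ModuleCat.{u} R) ℤ} [K.IsKProjective]
    (φ : Q.obj K ⟶ Q.obj L) : ∃ f : K ⟶ L, Q.map f = φ := by
  obtain ⟨g, hg⟩ := (CochainComplex.IsKProjective.Qh_map_bijective K
    ((HomotopyCategory.quotient _ _).obj L)).surjective
    ((quotientCompQhIso _).hom.app K ≫ φ ≫ (quotientCompQhIso _).inv.app L)
  obtain ⟨f, rfl⟩ := (HomotopyCategory.quotient _ _).map_surjective g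
  refine ⟨f, ?_⟩
  have := quotientCompQhIso_hom_naturality f
  rw [← cancel_epi ((quotientCompQhIso _).hom.app K), ← this, hg]
  simp

lemma kproj_Q_inj {K L : CochainComplex (ModuleCat.{u} R) ℤ} [K.IsKProjective]
    (f : K ⟶ L) (hf : Q.map f = 0) : Nonempty (Homotopy f 0) := by
  refine ⟨HomotopyCategory.homotopyOfEq _ _ ?_⟩
  apply (CochainComplex.IsKProjective.Qh_map_bijective K
    ((HomotopyCategory.quotient _ _).obj L)).injective
  have := quotientCompQhIso_hom_naturality f
  rw [hf, comp_zero] at this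
  rw [← cancel_mono ((quotientCompQhIso _).hom.app L), this]
  simp

lemma sum_bij (K : CochainComplex (ModuleCat.{u} R) ℤ) [K.IsKProjective]
    [((sumFC R ι).obj K).IsKProjective] (X : DerivedCategory (ModuleCat.{u} R))
    (φ : ι → (Q.obj K ⟶ X)) :
    ∃! g : Q.obj ((sumFC R ι).obj K) ⟶ X, ∀ i, Q.map (sumInclC R ι i K) ≫ g = φ i := by
  obtain ⟨L, ⟨e⟩⟩ : ∃ L, Nonempty (Q.obj L ≅ X) := ⟨_, ⟨Q.objObjPreimageIso X⟩⟩
  choose f hf using fun i => kproj_Q_surj R (φ i ≫ e.inv)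
  refine ⟨Q.map (sumDescC R ι f) ≫ e.hom, fun i => ?_, fun g' hg' => ?_⟩
  · rw [← Category.assoc, ← Q.map_comp, sumInclC_desc, hf]
    simp
  · rw [← cancel_mono e.inv, Category.assoc, e.hom_inv_id, Category.comp_id, ← sub_eq_zero]
    obtain ⟨k, hk⟩ := kproj_Q_surj R (g' ≫ e.inv - Q.map (sumDescC R ι f))
    rw [← hk]
    obtain ⟨H⟩ := sum_homotopy R ι k fun i => (kproj_Q_inj R (sumInclC R ι i K ≫ k) (by
      rw [Q.map_comp, hk, Preadditive.comp_sub, ← Category.assoc, hg', ← Q.map_comp,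
        sumInclC_desc, hf, sub_self])).some
    rw [Q_map_eq_of_homotopy _ H, Q.map_zero]

lemma sum_qiso {K A B : CochainComplex (ModuleCat.{u} R) ℤ} [K.IsKProjective]
    [((sumFC R ι).obj K).IsKProjective] (p : K ⟶ A) [QuasiIso p]
    (q : (sumFC R ι).obj K ⟶ B) [QuasiIso q] (incl : ι → (A ⟶ B))
    (h : ∀ i, p ≫ incl i = sumInclC R ι i K ≫ q)
    (X : DerivedCategory (ModuleCat.{u} R)) (φ : ι → (Q.obj A ⟶ X)) :
    ∃! g : Q.obj B ⟶ X, ∀ i, Q.map (incl i) ≫ g = φ i := by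
  obtain ⟨g, hg, hu⟩ := sum_bij R ι K X (fun i => Q.map p ≫ φ i)
  have h' : ∀ i, Q.map p ≫ Q.map (incl i) = Q.map (sumInclC R ι i K) ≫ Q.map q := fun i => by
    rw [← Q.map_comp, h, Q.map_comp]
  refine ⟨inv (Q.map q) ≫ g, fun i => ?_, fun g' hg' => ?_⟩
  · rw [← cancel_epi (Q.map p), ← Category.assoc, h', Category.assoc, IsIso.hom_inv_id_assoc, hg]
  · rw [IsIso.eq_inv_comp]
    refine hu _ fun i => ?_
    rw [← Category.assoc, ← h', Category.assoc, hg']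

/-- The single complex. -/
noncomputable abbrev SC (M : ModuleCat.{u} R) : CochainComplex (ModuleCat.{u} R) ℤ :=
  (HomologicalComplex.single (ModuleCat.{u} R) (ComplexShape.up ℤ) 0).obj M

/-- The single functor commutes with `sumF`. -/
noncomputable def sIso (M : ModuleCat.{u} R) :
    (sumFC R ι).obj (SC R M) ≅ SC R ((sumF R ι).obj M) :=
  (HomologicalComplex.singleMapHomologicalComplex (sumF R ι) (ComplexShape.up ℤ) 0).app M

lemma sIso_incl (M : ModuleCat.{u} R) (i : ι) :
    sumInclC R ι i (SC R M) ≫ (sIso R ι M).hom =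
      (HomologicalComplex.single (ModuleCat.{u} R) (ComplexShape.up ℤ) 0).map (sumIncl R ι i M) := by
  refine HomologicalComplex.from_single_hom_ext ?_
  rw [HomologicalComplex.single_map_f_self]
  have h1 : (sIso R ι M).hom.f 0 = _ :=
    HomologicalComplex.singleMapHomologicalComplex_hom_app_self (sumF R ι) (ComplexShape.up ℤ) 0 M
  rw [HomologicalComplex.comp_f, h1]
  exact ((Category.assoc _ _ _).symm.trans
    (congrArg (· ≫ _) (sumIncl_naturality R ι i _))).trans (Category.assoc _ _ _)

lemma sum_single (M : ModuleCat.{u} R) (X : DerivedCategory (ModuleCat.{u} R))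
    (φ : ι → (Q.obj (SC R M) ⟶ X)) :
    ∃! g : Q.obj (SC R ((sumF R ι).obj M)) ⟶ X,
      ∀ i, Q.map ((HomologicalComplex.single (ModuleCat.{u} R) (ComplexShape.up ℤ) 0).map
        (sumIncl R ι i M)) ≫ g = φ i := by
  let P := ProjectiveResolution.of M
  let K := P.cochainComplex
  have : ∀ n, Projective (((sumFC R ι).obj K).X n) := fun n =>
    inferInstanceAs (Projective ((sumF R ι).obj (K.X n)))
  have : ((sumFC R ι).obj K).IsStrictlyLE 0 := by
    rw [CochainComplex.isStrictlyLE_iff]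
    intro n hn
    exact (sumF R ι).map_isZero (K.isZero_of_isStrictlyLE 0 n hn)
  have : ((sumFC R ι).obj K).IsKProjective := CochainComplex.isKProjective_of_projective _ 0
  let p : K ⟶ SC R M := P.π'
  have : QuasiIso p := inferInstanceAs (QuasiIso P.π')
  refine sum_qiso R ι p ((sumFC R ι).map p ≫ (sIso R ι M).hom) _ (fun i => ?_) X φ
  rw [← Category.assoc, sumInclC_naturality, Category.assoc, sIso_incl]

lemma loc_sum_mem {S : Set (DerivedCategory (ModuleCat.{u} R))} (hS : IsLocalizingSub.{u} S)
    (M : ModuleCat.{u} R) (hM : smod R M ∈ S) : smod R ((sumF R ι).obj M) ∈ S := by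
  choose g hg hu using sum_single R ι M
  refine hS.coprod_mem (ι := ι) (fun _ => Q.obj (SC R M))
    (Cofan.mk (Q.obj (SC R ((sumF R ι).obj M))) (fun i => Q.map
      ((HomologicalComplex.single (ModuleCat.{u} R) (ComplexShape.up ℤ) 0).map (sumIncl R ι i M))))
    (Cofan.IsColimit.mk _ (fun s => g s.pt s.inj) ?_ ?_) (fun _ => hM)
  · intro s i
    exact hg s.pt s.inj i
  · intro s m hm
    exact hu s.pt s.inj m hm

lemma iso_mem {S : Set (DerivedCategory (ModuleCat.{u} R))} (hS : IsLocalizingSub.{u} S)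
    {M N : Type u} [AddCommGroup M] [Module R M] [AddCommGroup N] [Module R N] (e : M ≃ₗ[R] N)
    (hM : smod R (ModuleCat.of R M) ∈ S) : smod R (ModuleCat.of R N) ∈ S :=
  hS.mem_of_iso ((singleFunctor _ 0).mapIso e.toModuleIso) hM

lemma ses_mem₃ {S : Set (DerivedCategory (ModuleCat.{u} R))} (hS : IsLocalizingSub.{u} S)
    {M N P : Type u} [AddCommGroup M] [Module R M] [AddCommGroup N] [Module R N]
    [AddCommGroup P] [Module R P] (f : M →ₗ[R] N) (g : N →ₗ[R] P)
    (hf : Function.Injective f) (hg : Function.Surjective g) (h : Function.Exact f g)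
    (hM : smod R (ModuleCat.of R M) ∈ S) (hN : smod R (ModuleCat.of R N) ∈ S) :
    smod R (ModuleCat.of R P) ∈ S := by
  have hses := ModuleCat.shortComplex_shortExact
    (ModuleCat.shortComplexOfCompEqZero f g h.linearMap_comp_eq_zero) h hf hg
  exact hS.cone_mem _ (hses.singleTriangle_distinguished) hM hN

lemma ses_mem₁ {S : Set (DerivedCategory (ModuleCat.{u} R))} (hS : IsLocalizingSub.{u} S)
    {M N P : Type u} [AddCommGroup M] [Module R M] [AddCommGroup N] [Module R N]
    [AddCommGroup P] [Module R P] (f : M →ₗ[R] N) (g : N →ₗ[R] P)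
    (hf : Function.Injective f) (hg : Function.Surjective g) (h : Function.Exact f g)
    (hN : smod R (ModuleCat.of R N) ∈ S) (hP : smod R (ModuleCat.of R P) ∈ S) :
    smod R (ModuleCat.of R M) ∈ S := by
  have hses := ModuleCat.shortComplex_shortExact
    (ModuleCat.shortComplexOfCompEqZero f g h.linearMap_comp_eq_zero) h hf hg
  have h1 := hS.cone_mem _ (rot_of_distTriang _ hses.singleTriangle_distinguished) hN hP
  exact hS.mem_of_iso (shiftShiftNeg (smod R (ModuleCat.of R M)) (1 : ℤ)) (hS.shift_mem (-1) h1)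

lemma ses_mem₂ {S : Set (DerivedCategory (ModuleCat.{u} R))} (hS : IsLocalizingSub.{u} S)
    {M N P : Type u} [AddCommGroup M] [Module R M] [AddCommGroup N] [Module R N]
    [AddCommGroup P] [Module R P] (f : M →ₗ[R] N) (g : N →ₗ[R] P)
    (hf : Function.Injective f) (hg : Function.Surjective g) (h : Function.Exact f g)
    (hM : smod R (ModuleCat.of R M) ∈ S) (hP : smod R (ModuleCat.of R P) ∈ S) :
    smod R (ModuleCat.of R N) ∈ S := by
  have hses := ModuleCat.shortComplex_shortExact
    (ModuleCat.shortComplexOfCompEqZero f g h.linearMap_comp_eq_zero) h hf hg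
  exact hS.cone_mem _ (inv_rot_of_distTriang _ hses.singleTriangle_distinguished)
    (hS.shift_mem (-1) hP) hM
section LocAlgebra

open Polynomial

section MV
variable {S A B C : Type*} [CommRing S] [CommRing A] [CommRing B] [CommRing C]
  [Algebra S A] [Algebra S B] [Algebra S C] (a b : S) [IsLocalization.Away a A]
  [IsLocalization.Away b B] [IsLocalization.Away (a * b) C] (fA : A →ₐ[S] C) (fB : B →ₐ[S] C)

lemma away_zero {s : S} (h : algebraMap S A s = 0) : ∃ n : ℕ, a ^ n * s = 0 := by
  obtain ⟨n, hn⟩ := IsLocalization.Away.exists_of_eq (S := A) a (a := s) (b := 0) (by simpa using h)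
  exact ⟨n, by simpa using hn⟩

lemma mv_inj (hab : IsCoprime a b) (s : S) (h1 : algebraMap S A s = 0)
    (h2 : algebraMap S B s = 0) : s = 0 := by
  obtain ⟨n, hn⟩ := away_zero a h1
  obtain ⟨m, hm⟩ := away_zero b h2
  obtain ⟨u, v, huv⟩ := hab.pow (m := n) (n := m)
  linear_combination (-s) * huv + u * hn + v * hm

include a b in
lemma mv_surj (hab : IsCoprime a b) (w : C) : ∃ x y, fA x - fB y = w := by
  obtain ⟨n, m, hn⟩ := IsLocalization.Away.surj (a * b) w
  obtain ⟨u, v, huv⟩ := hab.pow (m := n) (n := n)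
  obtain ⟨ia, hia⟩ := (IsLocalization.Away.algebraMap_isUnit (S := A) a).exists_right_inv
  obtain ⟨ib, hib⟩ := (IsLocalization.Away.algebraMap_isUnit (S := B) b).exists_right_inv
  have ha := congrArg fA hia
  have hb := congrArg fB hib
  have hc := congrArg (algebraMap S C) huv
  simp only [map_mul, map_pow, map_add, map_one, AlgHom.commutes] at ha hb hc hn
  refine ⟨algebraMap S A (v * m) * ia ^ n, - (algebraMap S B (u * m) * ib ^ n), ?_⟩
  simp only [map_mul, map_pow, map_neg, AlgHom.commutes, ← hn]
  have ha' := congrArg (· ^ n) ha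
  have hb' := congrArg (· ^ n) hb
  simp only [mul_pow, one_pow] at ha' hb'
  linear_combination w * hc + (algebraMap S C v * w * algebraMap S C b ^ n) * ha' +
    (algebraMap S C u * w * algebraMap S C a ^ n) * hb'

lemma mv_exact (hab : IsCoprime a b) (x : A) (y : B) (h : fA x = fB y) :
    ∃ z, algebraMap S A z = x ∧ algebraMap S B z = y := by
  obtain ⟨n, m, hn⟩ := IsLocalization.Away.surj a x
  obtain ⟨n', m', hn'⟩ := IsLocalization.Away.surj b y
  have h1 := congrArg fA hn
  have h2 := congrArg fB hn'
  simp only [map_mul, map_pow, AlgHom.commutes] at h1 h2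
  obtain ⟨k, hk⟩ := away_zero (A := C) (a * b) (s := b ^ n' * m - a ^ n * m') (by
    simp only [map_sub, map_mul, map_pow, ← h1, ← h2, h]
    ring)
  obtain ⟨u, v, huv⟩ := hab.pow (m := n + k) (n := n' + k)
  rw [mul_pow] at hk
  have ea : a ^ (n + k) * (u * a ^ k * m + v * b ^ k * m') = a ^ k * m := by
    linear_combination a ^ k * m * huv - v * hk
  have eb : b ^ (n' + k) * (u * a ^ k * m + v * b ^ k * m') = b ^ k * m' := by
    linear_combination b ^ k * m' * huv + u * hk
  refine ⟨u * a ^ k * m + v * b ^ k * m', ?_, ?_⟩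
  · apply ((IsLocalization.Away.algebraMap_isUnit (S := A) a).pow (n + k)).mul_left_cancel
    rw [← map_pow, ← map_mul, ea]
    simp only [map_mul, map_pow, ← hn]
    ring
  · apply ((IsLocalization.Away.algebraMap_isUnit (S := B) b).pow (n' + k)).mul_left_cancel
    rw [← map_pow, ← map_mul, eb]
    simp only [map_mul, map_pow, ← hn']
    ring

end MV

variable (R : Type u) [CommRing R] [HasDerivedCategory.{w'} (ModuleCat.{u} R)]
  {L : Set (DerivedCategory (ModuleCat.{u} R))} (hL : IsLocalizingSub.{u} L)

lemma nzd_aux {S : Type*} [CommRing S] (h : S) (p : S[X]) (hp : (C h * X - 1) * p = 0) : p = 0 := by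
  ext n
  induction n with
  | zero =>
    have := congrArg (coeff · 0) hp
    simpa [sub_mul, mul_assoc] using this
  | succ n ih =>
    have := congrArg (coeff · (n + 1)) hp
    simpa [sub_mul, mul_assoc, coeff_X_mul, ih] using this

include hL in
lemma away_mem (S : Type u) [CommRing S] [Algebra R S] (h : S)
    (hS : smod R (ModuleCat.of R S) ∈ L) :
    smod R (ModuleCat.of R (Localization.Away h)) ∈ L := by
  have h1 : smod R (ModuleCat.of R (ULift.{u} ℕ →₀ S)) ∈ L :=
    loc_sum_mem R (ULift.{u} ℕ) hL (ModuleCat.of R S) hS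
  have h2 : smod R (ModuleCat.of R S[X]) ∈ L :=
    iso_mem R hL ((Finsupp.domLCongr Equiv.ulift).trans
      ((Polynomial.basisMonomials S).repr.symm.restrictScalars R)) h1
  let g : S[X] →ₐ[S] Localization.Away h :=
    ((Localization.awayEquivAdjoin h).symm.toAlgHom).comp (Ideal.Quotient.mkₐ S _)
  refine ses_mem₃ R hL (LinearMap.mulLeft R (C h * X - 1 : S[X])) (g.restrictScalars R).toLinearMap
    ?_ ?_ ?_ h2 h2
  · rw [injective_iff_map_eq_zero]
    exact fun p hp => nzd_aux h p hp
  · exact (Localization.awayEquivAdjoin h).symm.surjective.comp Ideal.Quotient.mk_surjective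
  · intro p
    have : (g.restrictScalars R).toLinearMap p = 0 ↔ (C h * X - 1 : S[X]) ∣ p := by
      rw [← AdjoinRoot.mk_eq_zero]
      change (Localization.awayEquivAdjoin h).symm (AdjoinRoot.mk (C h * X - 1) p) = 0 ↔ _
      exact map_eq_zero_iff _ (Localization.awayEquivAdjoin h).symm.injective
    rw [this]
    exact ⟨fun ⟨q, hq⟩ => ⟨q, hq.symm⟩, fun ⟨q, hq⟩ => ⟨q, hq.symm⟩⟩

include hL in
lemma isLoc_mem (g : R) (S S' : Type u) [CommRing S] [Algebra R S] [CommRing S'] [Algebra R S']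
    [IsLocalization.Away g S] [IsLocalization.Away g S']
    (hS : smod R (ModuleCat.of R S) ∈ L) : smod R (ModuleCat.of R S') ∈ L :=
  iso_mem R hL (IsLocalization.algEquiv (Submonoid.powers g) S S').toLinearEquiv hS

/-- `R_g` lies in `L`. -/
def AwayMem (L : Set (DerivedCategory (ModuleCat.{u} R))) (g : R) : Prop :=
  smod R (ModuleCat.of R (Localization.Away g)) ∈ L

include hL in
lemma awayMem_mul (g h : R) (hg : AwayMem R L g) : AwayMem R L (g * h) :=
  isLoc_mem R hL (g * h)
    (Localization.Away (algebraMap R (Localization.Away g) h)) _ (away_mem R hL _ _ hg)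

include hL in
lemma mv_mem (S : Type u) [CommRing S] [Algebra R S] (a b : S) (hab : IsCoprime a b)
    (ha : smod R (ModuleCat.of R (Localization.Away a)) ∈ L)
    (hb : smod R (ModuleCat.of R (Localization.Away b)) ∈ L)
    (hc : smod R (ModuleCat.of R (Localization.Away (a * b))) ∈ L) :
    smod R (ModuleCat.of R S) ∈ L := by
  have hu := IsLocalization.Away.algebraMap_isUnit (S := Localization.Away (a * b)) (a * b)
  rw [map_mul, IsUnit.mul_iff] at hu
  let fA : Localization.Away a →ₐ[S] Localization.Away (a * b) :=
    IsLocalization.liftAlgHom (M := Submonoid.powers a) (f := Algebra.ofId _ _) (by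
      rintro ⟨_, n, rfl⟩
      simpa [Algebra.ofId_apply] using hu.1.pow n)
  let fB : Localization.Away b →ₐ[S] Localization.Away (a * b) :=
    IsLocalization.liftAlgHom (M := Submonoid.powers b) (f := Algebra.ofId _ _) (by
      rintro ⟨_, n, rfl⟩
      simpa [Algebra.ofId_apply] using hu.2.pow n)
  have hp : smod R (ModuleCat.of R (Localization.Away a × Localization.Away b)) ∈ L :=
    ses_mem₂ R hL (LinearMap.inl R _ _) (LinearMap.snd R _ _) LinearMap.inl_injective
      LinearMap.snd_surjective Function.Exact.inl_snd ha hb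
  refine ses_mem₁ R hL
    ((IsScalarTower.toAlgHom R S (Localization.Away a)).toLinearMap.prod
      (IsScalarTower.toAlgHom R S (Localization.Away b)).toLinearMap)
    ((fA.restrictScalars R).toLinearMap.comp (LinearMap.fst R _ _) -
      (fB.restrictScalars R).toLinearMap.comp (LinearMap.snd R _ _)) ?_ ?_ ?_ hp hc
  · rw [injective_iff_map_eq_zero]
    intro s hs
    exact mv_inj a b hab s (congrArg Prod.fst hs) (congrArg Prod.snd hs)
  · intro w
    obtain ⟨x, y, h⟩ := mv_surj a b fA fB hab w
    exact ⟨(x, y), h⟩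
  · rintro ⟨x, y⟩
    constructor
    · intro h
      obtain ⟨z, h1, h2⟩ := mv_exact a b fA fB hab x y (sub_eq_zero.mp h)
      exact ⟨z, Prod.ext h1 h2⟩
    · rintro ⟨z, hz⟩
      have h1 : algebraMap S _ z = x := congrArg Prod.fst hz
      have h2 : algebraMap S _ z = y := congrArg Prod.snd hz
      refine sub_eq_zero.mpr ?_
      change fA x = fB y
      rw [← h1, ← h2, AlgHom.commutes, AlgHom.commutes]

include hL in
lemma awayMem_add (a b : R) (ha : AwayMem R L a) (hb : AwayMem R L b) : AwayMem R L (a + b) := by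
  have hu := IsLocalization.Away.algebraMap_isUnit (S := Localization.Away (a + b)) (a + b)
  obtain ⟨i, hi⟩ := hu.exists_left_inv
  refine mv_mem R hL (Localization.Away (a + b)) (algebraMap _ _ a) (algebraMap _ _ b)
    ⟨i, i, by rw [← mul_add, ← map_add, hi]⟩ ?_ ?_ ?_
  · exact isLoc_mem R hL (a * (a + b)) (Localization.Away (a * (a + b))) _ (awayMem_mul R hL _ _ ha)
  · exact isLoc_mem R hL (b * (a + b)) (Localization.Away (b * (a + b))) _ (awayMem_mul R hL _ _ hb)
  · rw [← map_mul]
    exact isLoc_mem R hL (a * b * (a + b)) (Localization.Away (a * b * (a + b))) _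
      (awayMem_mul R hL _ _ (awayMem_mul R hL _ _ ha))

include hL in
lemma awayMem_zero : AwayMem R L 0 := by
  have : Subsingleton (Localization.Away (0 : R)) :=
    IsLocalization.subsingleton (M := Submonoid.powers (0 : R)) (Submonoid.mem_powers _)
  have hz : IsZero (smod R (ModuleCat.of R (Localization.Away (0 : R)))) :=
    (singleFunctor (ModuleCat.{u} R) 0).map_isZero (ModuleCat.isZero_of_subsingleton _)
  exact hL.mem_of_iso (hz.isoZero).symm hL.zero_mem

include hL in
lemma awayMem_of_pow (h : R) (n : ℕ) (hn : AwayMem R L (h ^ n)) : AwayMem R L h := by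
  have h1 := awayMem_mul R hL _ h hn
  rw [← pow_succ] at h1
  have : IsLocalization.Away (h ^ (n + 1)) (Localization.Away h) := by
    have : IsLocalization.Away (algebraMap R (Localization.Away h) (h ^ n)) (Localization.Away h) :=
      IsLocalization.away_of_isUnit_of_bijective _ (by
        rw [map_pow]
        exact (IsLocalization.Away.algebraMap_isUnit h).pow n) Function.bijective_id
    rw [pow_succ]
    exact IsLocalization.Away.mul (Localization.Away h) (Localization.Away h) h (h ^ n)
  exact isLoc_mem R hL (h ^ (n + 1)) (Localization.Away (h ^ (n + 1))) _ h1

include hL in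
lemma awayMem_radical (J : Set R) (hJ : ∀ g ∈ J, AwayMem R L g) (h : R)
    (hh : h ∈ (Ideal.span J).radical) : AwayMem R L h := by
  obtain ⟨n, hn⟩ := hh
  refine awayMem_of_pow R hL h n ?_
  generalize h ^ n = y at hn
  induction hn using Submodule.span_induction with
  | mem x hx => exact hJ x hx
  | zero => exact awayMem_zero R hL
  | add x y _ _ hx hy => exact awayMem_add R hL x y hx hy
  | smul r x _ hx =>
    rw [smul_eq_mul, mul_comm]
    exact awayMem_mul R hL x r hx

end LocAlgebra

/-- Theorem: for an arbitrary subset `J ⊆ R`, with `√J` the radical of the ideal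
generated by `J`, one has `Loc({R_f : f ∈ J}) = Loc({R_f : f ∈ √J})` in `D(R)`. -/
theorem loc_localizations_eq_loc_localizations_radical (R : Type u) [CommRing R]
    [HasDerivedCategory.{w'} (ModuleCat.{u} R)] (J : Set R) :
    Loc.{u} {x | ∃ f ∈ J, x = smod R (ModuleCat.of R (Localization.Away f))} =
      Loc.{u} {x | ∃ f ∈ (Ideal.span J).radical,
        x = smod R (ModuleCat.of R (Localization.Away f))} := by
  apply Set.Subset.antisymm
  · refine Set.sInter_subset_sInter ?_
    rintro L ⟨hL, h⟩
    refine ⟨hL, ?_⟩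
    rintro _ ⟨f, hf, rfl⟩
    exact h ⟨f, Ideal.le_radical (Ideal.subset_span hf), rfl⟩
  · refine Set.sInter_subset_sInter ?_
    rintro L ⟨hL, h⟩
    refine ⟨hL, ?_⟩
    rintro _ ⟨f, hf, rfl⟩
    exact awayMem_radical R hL J (fun g hg => h ⟨g, hg, rfl⟩) f hf
end FinsuppFunctor
end

section
/- Let R be a commutative ring and let I and J be finitely generated ideals of R. Then Loc({R_f : f ∈ √I}) ⊆ Loc({R_f : f ∈ √J}) if and only if √I ⊆ √J. -/
open CategoryTheory CategoryTheory.Limits CategoryTheory.Pretriangulated ZeroObject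

universe w w' v u

section Helpers

variable {T : Type u} [Category.{v} T] [Preadditive T] [HasZeroObject T]
  [HasShift T ℤ] [∀ n : ℤ, (shiftFunctor T n).Additive] [Pretriangulated T]

/-- The objects with no graded maps to `K`. -/
def leftOrthShift (K : T) : Set T :=
  {x : T | ∀ (n : ℤ) (φ : x ⟶ K⟦n⟧), φ = 0}

theorem leftOrthShift_shift (K : T) (a : ℤ) {x : T} (hx : x ∈ leftOrthShift K) :
    x⟦a⟧ ∈ leftOrthShift K := by
  intro n φ
  apply (shiftFunctor T (-a)).map_injective
  rw [Functor.map_zero]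
  have h := hx (n + -a) ((shiftFunctorCompIsoId T a (-a) (by simp)).inv.app x ≫
    φ⟦-a⟧' ≫ (shiftFunctorAdd T n (-a)).inv.app K)
  rw [← cancel_epi ((shiftFunctorCompIsoId T a (-a) (by simp)).inv.app x),
    ← cancel_mono ((shiftFunctorAdd T n (-a)).inv.app K)]
  simpa using h

theorem leftOrthShift_isLocalizing (K : T) : IsLocalizingSub.{w} (leftOrthShift K) where
  zero_mem := fun n φ => (isZero_zero T).eq_of_src _ _
  mem_of_iso := fun e hx n φ => by
    rw [← cancel_epi e.hom, hx n (e.hom ≫ φ), comp_zero]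
  shift_mem := fun n x hx => leftOrthShift_shift K n hx
  cone_mem := fun Tr hT h₁ h₂ n φ => by
    obtain ⟨ψ, rfl⟩ := Triangle.yoneda_exact₃ Tr hT φ (h₂ n _)
    rw [leftOrthShift_shift K 1 h₁ n ψ, comp_zero]
  coprod_mem := fun f c hc h n φ => by
    refine Cofan.IsColimit.hom_ext hc _ _ (fun i => ?_)
    rw [h i n (c.inj i ≫ φ), comp_zero]

end Helpers

section HelpersDR

variable (R : Type u) [CommRing R] [HasDerivedCategory.{w'} (ModuleCat.{u} R)]

theorem smod_away_mem_leftOrthShift (g : R) (M : ModuleCat.{u} R) (hM : ∀ m : M, g • m = 0) :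
    smod R (ModuleCat.of R (Localization.Away g)) ∈ leftOrthShift (smod R M) := by
  intro n φ
  have hiso : IsIso (g • 𝟙 (ModuleCat.of R (Localization.Away g))) := by
    rw [ConcreteCategory.isIso_iff_bijective]
    have := (IsLocalization.Away.algebraMap_isUnit (S := Localization.Away g) g)
    have h2 := (IsUnit.isUnit_iff_mulLeft_bijective.mp this)
    convert h2 using 1
    ext x
    simp [Algebra.smul_def]
  have h1 : g • 𝟙 M = 0 := by
    ext m
    simp [hM]
  have h2 : g • 𝟙 (smod R M) = 0 := by
    have := congrArg (DerivedCategory.singleFunctor (ModuleCat.{u} R) 0).map h1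
    rw [Functor.map_smul, Functor.map_zero, CategoryTheory.Functor.map_id] at this
    exact this
  have h3 : g • 𝟙 ((smod R M)⟦n⟧) = 0 := by
    have := congrArg (shiftFunctor (DerivedCategory (ModuleCat.{u} R)) n).map h2
    rw [Functor.map_smul, Functor.map_zero, CategoryTheory.Functor.map_id] at this
    exact this
  have h4 : IsIso (g • 𝟙 (smod R (ModuleCat.of R (Localization.Away g)))) := by
    have : IsIso ((DerivedCategory.singleFunctor (ModuleCat.{u} R) 0).map
      (g • 𝟙 (ModuleCat.of R (Localization.Away g)))) := inferInstance
    rw [Functor.map_smul, CategoryTheory.Functor.map_id] at this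
    exact this
  rw [← cancel_epi (g • 𝟙 (smod R (ModuleCat.of R (Localization.Away g)))), comp_zero,
    Linear.smul_comp, Category.id_comp, ← Category.comp_id φ, ← Linear.comp_smul, h3, comp_zero]

theorem smod_away_notMem_leftOrthShift (f : R) (k : Type u) [Field k] [Algebra R k]
    (hf : algebraMap R k f ≠ 0) :
    smod R (ModuleCat.of R (Localization.Away f)) ∉
      leftOrthShift (smod R (ModuleCat.of R k)) := by
  intro h
  let a : Localization.Away f →ₐ[R] k :=
    IsLocalization.liftAlgHom (M := Submonoid.powers f) (f := Algebra.ofId R k) (by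
      rintro ⟨_, n, rfl⟩
      simpa [Algebra.ofId_apply] using (pow_ne_zero n hf))
  let b : ModuleCat.of R (Localization.Away f) ⟶ ModuleCat.of R k := ModuleCat.ofHom a.toLinearMap
  have h0 := h 0 ((DerivedCategory.singleFunctor (ModuleCat.{u} R) 0).map b ≫
    (shiftFunctorZero (DerivedCategory (ModuleCat.{u} R)) ℤ).inv.app _)
  have h1 : (DerivedCategory.singleFunctor (ModuleCat.{u} R) 0).map b = 0 := by
    rw [← cancel_mono ((shiftFunctorZero (DerivedCategory (ModuleCat.{u} R)) ℤ).inv.app _),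
      zero_comp]
    exact h0
  have h2 : b = 0 := by
    apply (DerivedCategory.singleFunctor (ModuleCat.{u} R) 0).map_injective
    rw [h1, Functor.map_zero]
  have h3 : a 1 = 0 := by
    have := congrArg (fun t => t.hom (1 : Localization.Away f)) h2
    exact this
  rw [map_one] at h3
  exact one_ne_zero h3

end HelpersDR

/-- Theorem: for finitely generated ideals `I`, `J` of `R`,
`Loc({R_f : f ∈ √I}) ⊆ Loc({R_f : f ∈ √J})` iff `√I ⊆ √J`. -/
theorem loc_localizations_subset_iff_radical_le (R : Type u) [CommRing R]
    [HasDerivedCategory.{w'} (ModuleCat.{u} R)]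
    (I J : Ideal R) (hI : I.FG) (hJ : J.FG) :
    Loc.{u} {x | ∃ f ∈ I.radical,
        x = smod R (ModuleCat.of R (Localization.Away f))} ⊆
      Loc.{u} {x | ∃ f ∈ J.radical,
        x = smod R (ModuleCat.of R (Localization.Away f))} ↔
    I.radical ≤ J.radical := by
  constructor
  · intro h
    by_contra hIJ
    obtain ⟨f, hfI, hfJ⟩ := SetLike.not_le_iff_exists.mp hIJ
    rw [Ideal.radical_eq_sInf, Submodule.mem_sInf] at hfJ
    push Not at hfJ
    obtain ⟨(p : Ideal R), ⟨hJp, hp⟩, hfp⟩ := hfJ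
    have hmem := h (Set.mem_sInter.mpr (fun L hL => hL.2 ⟨f, hfI, rfl⟩))
    refine smod_away_notMem_leftOrthShift R f p.ResidueField
      (fun h0 => hfp (Ideal.algebraMap_residueField_eq_zero.mp h0)) ?_
    refine Set.mem_sInter.mp hmem _ ⟨leftOrthShift_isLocalizing _, ?_⟩
    rintro _ ⟨g, hg, rfl⟩
    refine smod_away_mem_leftOrthShift R g _ (fun m => ?_)
    have hgp : g ∈ p := hp.radical_le_iff.mpr hJp hg
    have : algebraMap R p.ResidueField g = 0 := Ideal.algebraMap_residueField_eq_zero.mpr hgp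
    change g • (show p.ResidueField from m) = 0
    rw [Algebra.smul_def, this, zero_mul]
  · intro h
    refine Set.sInter_subset_sInter ?_
    rintro L ⟨hL, hS⟩
    refine ⟨hL, ?_⟩
    rintro _ ⟨f, hf, rfl⟩
    exact hS ⟨f, h hf, rfl⟩
end

section
/- Let (T, ⊗, 1) be a tensor triangulated category having only a set of radical thick tensor ideals. Then the radical thick tensor ideals of T, ordered by inclusion (with meet given by intersection and join of a family given by the radical of the thick tensor ideal generated by their union), form a coherent frame, and its finite elements are precisely the principal radical thick tensor ideals, i.e. those of the form √a for a single object a ∈ T. -/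
open CategoryTheory CategoryTheory.Limits CategoryTheory.Pretriangulated
open CategoryTheory.MonoidalCategory ZeroObject

universe w v u

section TT

variable {T : Type u} [Category.{v} T] [Preadditive T] [HasZeroObject T]
  [HasShift T ℤ] [∀ n : ℤ, (shiftFunctor T n).Additive] [Pretriangulated T]
  [MonoidalCategory T] [SymmetricCategory T]
  [∀ X : T, (tensorLeft X).CommShift ℤ]
  [∀ X : T, (tensorLeft X).IsTriangulated]

/-- `tpow a n` is the `n`-fold tensor power `a ⊗ ⋯ ⊗ a` (with `tpow a 0 = 𝟙_ T`). -/
def tpow (a : T) : ℕ → T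
  | 0 => 𝟙_ T
  | n + 1 => tpow a n ⊗ a

/-- A thick tensor ideal of a tensor triangulated category, encoded as a set of
objects: a full triangulated subcategory (closed under isomorphisms, zero,
shifts and cones of distinguished triangles), closed under finite sums and
direct summands (retracts), and absorbing for the tensor product. -/
structure IsThickTensorIdeal (S : Set T) : Prop where
  zero_mem : (0 : T) ∈ S
  mem_of_iso : ∀ {x y : T}, (x ≅ y) → x ∈ S → y ∈ S
  shift_mem : ∀ (n : ℤ) {x : T}, x ∈ S → x⟦n⟧ ∈ S
  cone_mem : ∀ (Tr : Triangle T), Tr ∈ distinguishedTriangles →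
    Tr.obj₁ ∈ S → Tr.obj₂ ∈ S → Tr.obj₃ ∈ S
  sum_mem : ∀ {x y : T} (c : BinaryCofan x y), IsColimit c → x ∈ S → y ∈ S → c.pt ∈ S
  summand_mem : ∀ {x y : T} (i : x ⟶ y) (r : y ⟶ x), i ≫ r = 𝟙 x → y ∈ S → x ∈ S
  tensor_mem : ∀ {a : T}, a ∈ S → ∀ b : T, a ⊗ b ∈ S

/-- The smallest thick tensor ideal containing a set `S` of objects. -/
def ttIdealGen (S : Set T) : Set T :=
  ⋂₀ {I : Set T | IsThickTensorIdeal I ∧ S ⊆ I}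

/-- The radical `√S` of the thick tensor ideal generated by `S`: the objects
some positive tensor power of which lies in the thick tensor ideal generated
by `S`. -/
def ttRad (S : Set T) : Set T :=
  {a : T | ∃ n : ℕ, 1 ≤ n ∧ tpow a n ∈ ttIdealGen S}

/-- A radical thick tensor ideal. -/
def IsRadicalTTIdeal (S : Set T) : Prop :=
  IsThickTensorIdeal S ∧ ∀ (a : T) (n : ℕ), 1 ≤ n → tpow a n ∈ S → a ∈ S

theorem cls_tensor (x y : T) : toSkeleton (x ⊗ y) = toSkeleton x * toSkeleton y :=
  Skeleton.toSkeleton_tensorObj x y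

theorem cls_tpow (a : T) (n : ℕ) : toSkeleton (tpow a n) = toSkeleton a ^ n := by
  induction n with
  | zero => rw [pow_zero]; rfl
  | succ n ih => rw [pow_succ, ← ih]; exact cls_tensor _ _

theorem IsThickTensorIdeal.congr {I : Set T} (hI : IsThickTensorIdeal I) {x y : T}
    (h : toSkeleton x = toSkeleton y) (hx : x ∈ I) : y ∈ I :=
  hI.mem_of_iso (Skeleton.isoOfEq h) hx

theorem isThick_mk' {S : Set T} (zero_mem : (0 : T) ∈ S)
    (mem_of_iso : ∀ {x y : T}, (x ≅ y) → x ∈ S → y ∈ S)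
    (shift_mem : ∀ (n : ℤ) {x : T}, x ∈ S → x⟦n⟧ ∈ S)
    (cone_mem : ∀ (Tr : Triangle T), Tr ∈ distinguishedTriangles →
      Tr.obj₁ ∈ S → Tr.obj₂ ∈ S → Tr.obj₃ ∈ S)
    (summand_mem : ∀ {x y : T} (i : x ⟶ y) (r : y ⟶ x), i ≫ r = 𝟙 x → y ∈ S → x ∈ S)
    (tensor_mem : ∀ {a : T}, a ∈ S → ∀ b : T, a ⊗ b ∈ S) : IsThickTensorIdeal S where
  zero_mem := zero_mem
  mem_of_iso := mem_of_iso
  shift_mem := shift_mem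
  cone_mem := cone_mem
  summand_mem := summand_mem
  tensor_mem := tensor_mem
  sum_mem := by
    intro x y c hc hx hy
    have h1 := inv_rot_of_distTriang _ (binaryBiproductTriangle_distinguished x y)
    have h2 : (x ⊞ y) ∈ S := cone_mem _ h1 (shift_mem (-1) hy) hx
    exact mem_of_iso ((BinaryBiproduct.isColimit x y).coconePointUniqueUpToIso hc) h2

theorem ttIdealGen_thick (S : Set T) : IsThickTensorIdeal (ttIdealGen S) where
  zero_mem := fun _ h => h.1.zero_mem
  mem_of_iso := fun e hx I h => h.1.mem_of_iso e (hx I h)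
  shift_mem := fun n _ hx I h => h.1.shift_mem n (hx I h)
  cone_mem := fun Tr hT h1 h2 I h => h.1.cone_mem Tr hT (h1 I h) (h2 I h)
  sum_mem := fun c hc h1 h2 I h => h.1.sum_mem c hc (h1 I h) (h2 I h)
  summand_mem := fun i r e hx I h => h.1.summand_mem i r e (hx I h)
  tensor_mem := fun hx b I h => h.1.tensor_mem (hx I h) b

theorem subset_ttIdealGen (S : Set T) : S ⊆ ttIdealGen S := fun _ hx _ h => h.2 hx

theorem ttIdealGen_min {S I : Set T} (hI : IsThickTensorIdeal I) (h : S ⊆ I) :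
    ttIdealGen S ⊆ I := fun _ hx => hx I ⟨hI, h⟩

theorem colon_thick {I : Set T} (hI : IsThickTensorIdeal I) (w : T) :
    IsThickTensorIdeal {y : T | w ⊗ y ∈ I} := by
  apply isThick_mk'
  · exact hI.mem_of_iso (tensorLeft w).mapZeroObject.symm hI.zero_mem
  · intro x y e hx
    exact hI.mem_of_iso ((tensorLeft w).mapIso e) hx
  · intro n x hx
    exact hI.mem_of_iso (((tensorLeft w).commShiftIso n).app x).symm (hI.shift_mem n hx)
  · intro Tr hT h1 h2
    exact hI.cone_mem _ ((tensorLeft w).map_distinguished Tr hT) h1 h2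
  · intro x y i r e hy
    refine hI.summand_mem (w ◁ i) (w ◁ r) ?_ hy
    rw [← MonoidalCategory.whiskerLeft_comp, e, MonoidalCategory.whiskerLeft_id]
  · intro a ha b
    exact hI.mem_of_iso (α_ w a b) (hI.tensor_mem ha b)

theorem colon_tpow {I : Set T} (hI : IsThickTensorIdeal I) {x y : T}
    (h : ∀ w : T, w ⊗ x ∈ I → w ⊗ y ∈ I) (n : ℕ) :
    ∀ w : T, w ⊗ tpow x n ∈ I → w ⊗ tpow y n ∈ I := by
  induction n with
  | zero => exact fun w hw => hw
  | succ n ih =>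
    intro w hw
    have h1 : (w ⊗ tpow x n) ⊗ x ∈ I := hI.mem_of_iso (α_ _ _ _).symm hw
    have h2 : (w ⊗ y) ⊗ tpow x n ∈ I := hI.congr (by
      simp only [cls_tensor]; exact mul_right_comm _ _ _) (h _ h1)
    refine hI.congr ?_ (ih _ h2)
    change _ = toSkeleton (w ⊗ (tpow y n ⊗ y))
    simp only [cls_tensor]
    rw [mul_right_comm, mul_assoc]

theorem tpow_of_colon {I : Set T} (hI : IsThickTensorIdeal I) {x y : T}
    (h : ∀ w : T, w ⊗ x ∈ I → w ⊗ y ∈ I) (n : ℕ) (hx : tpow x n ∈ I) : tpow y n ∈ I :=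
  hI.mem_of_iso (λ_ _) (colon_tpow hI h n (𝟙_ T) (hI.mem_of_iso (λ_ _).symm hx))

theorem mem_mul_right {I : Set T} (hI : IsThickTensorIdeal I) {x z : T} (t : Skeleton T)
    (hx : x ∈ I) (h : toSkeleton z = toSkeleton x * t) : z ∈ I := by
  obtain ⟨b, rfl⟩ := Quotient.exists_rep t
  exact hI.congr (h.trans (cls_tensor x b).symm).symm (hI.tensor_mem hx b)

theorem cone_aux {I : Set T} (hI : IsThickTensorIdeal I) (Tr : Triangle T)
    (hT : Tr ∈ distinguishedTriangles) {m n : ℕ} (hm : tpow Tr.obj₁ m ∈ I)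
    (hn : tpow Tr.obj₂ n ∈ I) (k : ℕ) : ∀ i j : ℕ, i + j + k = m + n →
      (tpow Tr.obj₁ i ⊗ tpow Tr.obj₂ j) ⊗ tpow Tr.obj₃ k ∈ I := by
  induction k with
  | zero =>
    intro i j hij
    by_cases h : m ≤ i
    · obtain ⟨d, rfl⟩ := Nat.exists_eq_add_of_le h
      refine mem_mul_right hI
        (toSkeleton Tr.obj₁ ^ d * toSkeleton Tr.obj₂ ^ j * toSkeleton Tr.obj₃ ^ 0) hm ?_
      simp only [cls_tensor, cls_tpow, pow_add, mul_assoc]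
    · have h : n ≤ j := by omega
      obtain ⟨d, rfl⟩ := Nat.exists_eq_add_of_le h
      refine mem_mul_right hI
        (toSkeleton Tr.obj₁ ^ i * toSkeleton Tr.obj₂ ^ d * toSkeleton Tr.obj₃ ^ 0) hn ?_
      simp only [cls_tensor, cls_tpow, pow_add, mul_assoc]
      exact mul_left_comm _ _ _
  | succ k ih =>
    intro i j hij
    have h1 := ih (i + 1) j (by omega)
    have h2 := ih i (j + 1) (by omega)
    have h3 := (colon_thick hI ((tpow Tr.obj₁ i ⊗ tpow Tr.obj₂ j) ⊗ tpow Tr.obj₃ k)).cone_mem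
      Tr hT (hI.congr ?_ h1) (hI.congr ?_ h2)
    · refine hI.congr ?_ h3
      simp only [cls_tensor, cls_tpow, pow_succ, mul_assoc]
    · simp only [cls_tensor, cls_tpow, pow_succ]
      ac_rfl
    · simp only [cls_tensor, cls_tpow, pow_succ]
      ac_rfl

theorem exists_tpow_retract {x y : T} (i : x ⟶ y) (r : y ⟶ x) (e : i ≫ r = 𝟙 x) (n : ℕ) :
    ∃ (i' : tpow x n ⟶ tpow y n) (r' : tpow y n ⟶ tpow x n), i' ≫ r' = 𝟙 _ := by
  induction n with
  | zero => exact ⟨𝟙 _, 𝟙 _, Category.comp_id _⟩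
  | succ n ih =>
    obtain ⟨i', r', h⟩ := ih
    refine ⟨(i' ⊗ₘ i : tpow x n ⊗ x ⟶ tpow y n ⊗ y), (r' ⊗ₘ r : tpow y n ⊗ y ⟶ tpow x n ⊗ x), ?_⟩
    have h3 : (i' ⊗ₘ i) ≫ (r' ⊗ₘ r) = 𝟙 (tpow x n ⊗ x) := by
      rw [MonoidalCategory.tensorHom_comp_tensorHom, h, e]
      exact MonoidalCategory.id_tensorHom_id _ _
    exact h3

theorem subset_ttRad (S : Set T) : S ⊆ ttRad S := fun x hx =>
  ⟨1, le_rfl, (ttIdealGen_thick S).mem_of_iso (λ_ x).symm (subset_ttIdealGen S hx)⟩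

theorem gen_subset_ttRad (S : Set T) : ttIdealGen S ⊆ ttRad S := fun x hx =>
  ⟨1, le_rfl, (ttIdealGen_thick S).mem_of_iso (λ_ x).symm hx⟩

theorem ttRad_min {S J : Set T} (hJ : IsRadicalTTIdeal J) (h : S ⊆ J) : ttRad S ⊆ J := by
  rintro x ⟨n, hn, hx⟩
  exact hJ.2 x n hn (ttIdealGen_min hJ.1 h hx)

theorem ttRad_radical (S : Set T) : IsRadicalTTIdeal (ttRad S) := by
  have hG := ttIdealGen_thick S
  refine ⟨isThick_mk' ?_ ?_ ?_ ?_ ?_ ?_, ?_⟩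
  · exact gen_subset_ttRad S hG.zero_mem
  · rintro x y e ⟨n, hn, hx⟩
    exact ⟨n, hn, hG.congr (by rw [cls_tpow, cls_tpow, congr_toSkeleton_of_iso e]) hx⟩
  · rintro k x ⟨n, hn, hx⟩
    exact ⟨n, hn, tpow_of_colon hG (fun w hw => (colon_thick hG w).shift_mem k hw) n hx⟩
  · rintro Tr hT ⟨m, hm, h1⟩ ⟨n, hn, h2⟩
    refine ⟨m + n, by omega, hG.congr ?_ (cone_aux hG Tr hT h1 h2 (m + n) 0 0 (by omega))⟩
    simp only [cls_tensor, cls_tpow, pow_zero, one_mul]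
  · rintro x y i r e ⟨n, hn, hy⟩
    obtain ⟨i', r', h⟩ := exists_tpow_retract i r e n
    exact ⟨n, hn, hG.summand_mem i' r' h hy⟩
  · rintro a ⟨n, hn, ha⟩ b
    refine ⟨n, hn, mem_mul_right hG (toSkeleton b ^ n) ha ?_⟩
    simp only [cls_tensor, cls_tpow, mul_pow]
  · rintro a n hn ⟨m, hm, h⟩
    refine ⟨n * m, Nat.mul_pos hn hm, hG.congr ?_ h⟩
    simp only [cls_tpow, pow_mul]

theorem mem_of_sq {I : Set T} (hI : IsRadicalTTIdeal I) {x : T} (h : x ⊗ x ∈ I) : x ∈ I := by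
  refine hI.2 x 2 (by omega) (hI.1.congr ?_ h)
  rw [cls_tensor, cls_tpow, pow_two]

theorem mem_comm {I : Set T} (hI : IsThickTensorIdeal I) {x y : T} (h : x ⊗ y ∈ I) :
    y ⊗ x ∈ I := hI.mem_of_iso (β_ x y) h

theorem colon_radical {I : Set T} (hI : IsRadicalTTIdeal I) (w : T) :
    IsRadicalTTIdeal {y : T | w ⊗ y ∈ I} := by
  refine ⟨colon_thick hI.1 w, ?_⟩
  intro a n hn h
  refine hI.2 (w ⊗ a) n hn (mem_mul_right hI.1 (toSkeleton w ^ (n - 1)) h ?_)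
  obtain ⟨k, rfl⟩ : ∃ k, n = k + 1 := ⟨n - 1, by omega⟩
  simp only [cls_tensor, cls_tpow, mul_pow, Nat.add_sub_cancel]
  rw [pow_succ' (toSkeleton w), mul_assoc, mul_assoc]
  exact congrArg _ (mul_comm _ _)

theorem inter_radical {I J : Set T} (hI : IsRadicalTTIdeal I) (hJ : IsRadicalTTIdeal J) :
    IsRadicalTTIdeal (I ∩ J) :=
  ⟨{ zero_mem := ⟨hI.1.zero_mem, hJ.1.zero_mem⟩
     mem_of_iso := fun e h => ⟨hI.1.mem_of_iso e h.1, hJ.1.mem_of_iso e h.2⟩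
     shift_mem := fun n _ h => ⟨hI.1.shift_mem n h.1, hJ.1.shift_mem n h.2⟩
     cone_mem := fun Tr hT h h' => ⟨hI.1.cone_mem Tr hT h.1 h'.1, hJ.1.cone_mem Tr hT h.2 h'.2⟩
     sum_mem := fun c hc h h' => ⟨hI.1.sum_mem c hc h.1 h'.1, hJ.1.sum_mem c hc h.2 h'.2⟩
     summand_mem := fun i r e h => ⟨hI.1.summand_mem i r e h.1, hJ.1.summand_mem i r e h.2⟩
     tensor_mem := fun h b => ⟨hI.1.tensor_mem h.1 b, hJ.1.tensor_mem h.2 b⟩ },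
   fun a n hn h => ⟨hI.2 a n hn h.1, hJ.2 a n hn h.2⟩⟩

theorem ttRad_mono {S S' : Set T} (h : S ⊆ S') : ttRad S ⊆ ttRad S' :=
  ttRad_min (ttRad_radical S') (h.trans (subset_ttRad S'))

theorem directed_radical (𝒮 : Set (Set T)) :
    IsRadicalTTIdeal {y : T | ∃ K ⊆ 𝒮, K.Finite ∧ y ∈ ttRad (⋃₀ K)} := by
  refine ⟨isThick_mk' ?_ ?_ ?_ ?_ ?_ ?_, ?_⟩
  · exact ⟨∅, Set.empty_subset _, Set.finite_empty, (ttRad_radical _).1.zero_mem⟩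
  · rintro x y e ⟨K, hK, hf, h⟩
    exact ⟨K, hK, hf, (ttRad_radical _).1.mem_of_iso e h⟩
  · rintro n x ⟨K, hK, hf, h⟩
    exact ⟨K, hK, hf, (ttRad_radical _).1.shift_mem n h⟩
  · rintro Tr hT ⟨K, hK, hf, h⟩ ⟨K', hK', hf', h'⟩
    refine ⟨K ∪ K', Set.union_subset hK hK', hf.union hf', (ttRad_radical _).1.cone_mem Tr hT ?_ ?_⟩
    · exact ttRad_mono (Set.sUnion_subset_sUnion Set.subset_union_left) h
    · exact ttRad_mono (Set.sUnion_subset_sUnion Set.subset_union_right) h'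
  · rintro x y i r e ⟨K, hK, hf, h⟩
    exact ⟨K, hK, hf, (ttRad_radical _).1.summand_mem i r e h⟩
  · rintro a ⟨K, hK, hf, h⟩ b
    exact ⟨K, hK, hf, (ttRad_radical _).1.tensor_mem h b⟩
  · rintro a n hn ⟨K, hK, hf, h⟩
    exact ⟨K, hK, hf, (ttRad_radical _).2 a n hn h⟩

theorem finite_principal {I : Set T} (hI : IsRadicalTTIdeal I) (K : Set (Set T)) (hf : K.Finite) :
    K ⊆ {K : Set T | ∃ a ∈ I, K = ttRad {a}} → ∃ a ∈ I, ⋃₀ K ⊆ ttRad {a} := by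
  induction K, hf using Set.Finite.induction_on with
  | empty => exact fun _ => ⟨0, hI.1.zero_mem, by simp⟩
  | @insert L K _ _ ih =>
    intro h
    obtain ⟨a, ha, hK⟩ := ih ((Set.subset_insert _ _).trans h)
    obtain ⟨b, hb, rfl⟩ := h (Set.mem_insert _ _)
    have hR := ttRad_radical {a ⊞ b}
    have hab : (a ⊞ b) ∈ ttRad {a ⊞ b} := subset_ttRad _ rfl
    refine ⟨a ⊞ b, hI.1.sum_mem _ (BinaryBiproduct.isColimit a b) ha hb, ?_⟩
    rw [Set.sUnion_insert]
    refine Set.union_subset (ttRad_min hR ?_) (hK.trans (ttRad_min hR ?_))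
    · rw [Set.singleton_subset_iff]
      exact hR.1.summand_mem biprod.inr biprod.snd (by simp) hab
    · rw [Set.singleton_subset_iff]
      exact hR.1.summand_mem biprod.inl biprod.fst (by simp) hab

theorem join_principal {I : Set T} (hI : IsRadicalTTIdeal I) :
    I = ttRad (⋃₀ {K : Set T | ∃ a ∈ I, K = ttRad {a}}) := by
  apply Set.Subset.antisymm
  · intro a ha
    exact subset_ttRad _ ⟨ttRad {a}, ⟨a, ha, rfl⟩, subset_ttRad _ rfl⟩
  · refine ttRad_min hI (Set.sUnion_subset ?_)
    rintro _ ⟨a, ha, rfl⟩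
    exact ttRad_min hI (Set.singleton_subset_iff.2 ha)

/-- Theorem: the radical thick tensor ideals of a tensor triangulated category
`T`, ordered by inclusion, form a coherent frame (in this object-set encoding
they automatically form a set): binary meets are intersections, the join of a
family is the radical of the thick tensor ideal generated by the union, finite
meets distribute over arbitrary joins, every element is a join of principal
radical thick tensor ideals `√a`, the top element is principal and principal
elements are closed under meets, and the finite (compact) elements are
precisely the principal radical thick tensor ideals `√a` for single objects
`a ∈ T`. -/
theorem radicalTTIdeals_coherent_frame :
    -- binary meets are intersections:
    (∀ I J : Set T, IsRadicalTTIdeal I → IsRadicalTTIdeal J →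
      IsRadicalTTIdeal (I ∩ J)) ∧
    -- arbitrary joins: ttRad(⋃₀ 𝒮) is the least radical thick tensor ideal
    -- containing every member of 𝒮:
    (∀ 𝒮 : Set (Set T), (∀ I ∈ 𝒮, IsRadicalTTIdeal I) →
      IsRadicalTTIdeal (ttRad (⋃₀ 𝒮)) ∧ (∀ I ∈ 𝒮, I ⊆ ttRad (⋃₀ 𝒮)) ∧
      (∀ J : Set T, IsRadicalTTIdeal J → (∀ I ∈ 𝒮, I ⊆ J) →
        ttRad (⋃₀ 𝒮) ⊆ J)) ∧
    -- the frame distributivity law: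
    (∀ J : Set T, IsRadicalTTIdeal J → ∀ 𝒮 : Set (Set T),
      (∀ I ∈ 𝒮, IsRadicalTTIdeal I) →
      J ∩ ttRad (⋃₀ 𝒮) = ttRad (⋃₀ {K : Set T | ∃ I ∈ 𝒮, K = J ∩ I})) ∧
    -- coherence: every element is the join of the principal (finite) elements
    -- below it:
    (∀ I : Set T, IsRadicalTTIdeal I →
      I = ttRad (⋃₀ {K : Set T | ∃ a ∈ I, K = ttRad {a}})) ∧
    -- the top element is principal, and principal elements are closed under
    -- binary meets:
    ttRad {(𝟙_ T)} = Set.univ ∧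
    (∀ a b : T, ttRad {a} ∩ ttRad {b} = ttRad {a ⊗ b}) ∧
    -- the finite elements are exactly the principal ones:
    (∀ I : Set T, IsRadicalTTIdeal I →
      ((∀ 𝒮 : Set (Set T), (∀ J ∈ 𝒮, IsRadicalTTIdeal J) →
          I ⊆ ttRad (⋃₀ 𝒮) →
            ∃ K ⊆ 𝒮, K.Finite ∧ I ⊆ ttRad (⋃₀ K)) ↔
        ∃ a : T, I = ttRad {a})) := by
  refine ⟨fun I J hI hJ => inter_radical hI hJ, ?_, ?_, fun I hI => join_principal hI, ?_, ?_, ?_⟩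
  · intro 𝒮 _
    exact ⟨ttRad_radical _, fun I hI => (Set.subset_sUnion_of_mem hI).trans (subset_ttRad _),
      fun J hJ h => ttRad_min hJ (Set.sUnion_subset h)⟩
  · intro J hJ 𝒮 h𝒮
    have hR := ttRad_radical (⋃₀ {K : Set T | ∃ I ∈ 𝒮, K = J ∩ I})
    apply Set.Subset.antisymm
    · rintro x ⟨hxJ, hx⟩
      refine mem_of_sq hR (ttRad_min (colon_radical hR x) (Set.sUnion_subset ?_) hx)
      intro I hI y hy
      exact subset_ttRad _ ⟨J ∩ I, ⟨I, hI, rfl⟩, hJ.1.tensor_mem hxJ y,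
        mem_comm (h𝒮 I hI).1 ((h𝒮 I hI).1.tensor_mem hy x)⟩
    · refine ttRad_min (inter_radical hJ (ttRad_radical _)) (Set.sUnion_subset ?_)
      rintro _ ⟨I, hI, rfl⟩ y hy
      exact ⟨hy.1, subset_ttRad _ ⟨I, hI, hy.2⟩⟩
  · refine Set.eq_univ_of_forall fun x => ?_
    have hR := ttRad_radical {(𝟙_ T)}
    exact hR.1.mem_of_iso (λ_ x) (hR.1.tensor_mem (subset_ttRad _ rfl) x)
  · intro a b
    have hR := ttRad_radical {a ⊗ b}
    have hA := ttRad_radical {a}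
    have hB := ttRad_radical {b}
    apply Set.Subset.antisymm
    · rintro x ⟨hxa, hxb⟩
      have h1 : a ⊗ x ∈ ttRad {a ⊗ b} :=
        ttRad_min (colon_radical hR a) (Set.singleton_subset_iff.2 (subset_ttRad _ rfl)) hxb
      exact mem_of_sq hR
        (ttRad_min (colon_radical hR x) (Set.singleton_subset_iff.2 (mem_comm hR.1 h1)) hxa)
    · refine ttRad_min (inter_radical hA hB) (Set.singleton_subset_iff.2 ⟨?_, ?_⟩)
      · exact hA.1.tensor_mem (subset_ttRad _ rfl) b
      · exact mem_comm hB.1 (hB.1.tensor_mem (subset_ttRad _ rfl) a)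
  · intro I hI
    constructor
    · intro h
      obtain ⟨K, hK, hf, hIK⟩ := h {K : Set T | ∃ a ∈ I, K = ttRad {a}}
        (by rintro _ ⟨a, _, rfl⟩; exact ttRad_radical _) (join_principal hI).subset
      obtain ⟨a, ha, hKa⟩ := finite_principal hI K hf hK
      exact ⟨a, Set.Subset.antisymm (hIK.trans (ttRad_min (ttRad_radical _) hKa))
        (ttRad_min hI (Set.singleton_subset_iff.2 ha))⟩
    · rintro ⟨a, rfl⟩ 𝒮 _ h
      have h1 : ⋃₀ 𝒮 ⊆ {y : T | ∃ K ⊆ 𝒮, K.Finite ∧ y ∈ ttRad (⋃₀ K)} := by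
        rintro y ⟨J, hJ, hy⟩
        exact ⟨{J}, Set.singleton_subset_iff.2 hJ, Set.finite_singleton J,
          subset_ttRad _ ⟨J, rfl, hy⟩⟩
      obtain ⟨K, hK, hf, hy⟩ := ttRad_min (directed_radical 𝒮) h1 (h (subset_ttRad _ rfl))
      exact ⟨K, hK, hf, ttRad_min (ttRad_radical _) (Set.singleton_subset_iff.2 hy)⟩

end TT
end

section
/- Let I be a tensor ideal in a tensor triangulated category (T, ⊗, 1), and let x → y → z → Σx be a distinguished triangle in T. If x^⊗p ∈ I and y^⊗q ∈ I for some p, q ≥ 1, then z^⊗(p+q−1) ∈ I. -/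
open CategoryTheory CategoryTheory.Limits CategoryTheory.Pretriangulated
open CategoryTheory.MonoidalCategory ZeroObject

universe w v u

section TT

variable {T : Type u} [Category.{v} T] [Preadditive T] [HasZeroObject T]
  [HasShift T ℤ] [∀ n : ℤ, (shiftFunctor T n).Additive] [Pretriangulated T]
  [MonoidalCategory T] [SymmetricCategory T]
  [∀ X : T, (tensorLeft X).CommShift ℤ]
  [∀ X : T, (tensorLeft X).IsTriangulated]

/-- A tensor ideal of a tensor triangulated category: a full triangulated
subcategory (closed under isomorphisms, zero, shifts and cones of distinguished
triangles) absorbing for the tensor product. -/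
structure IsTensorIdeal (S : Set T) : Prop where
  zero_mem : (0 : T) ∈ S
  mem_of_iso : ∀ {x y : T}, (x ≅ y) → x ∈ S → y ∈ S
  shift_mem : ∀ (n : ℤ) {x : T}, x ∈ S → x⟦n⟧ ∈ S
  cone_mem : ∀ (Tr : Triangle T), Tr ∈ distinguishedTriangles →
    Tr.obj₁ ∈ S → Tr.obj₂ ∈ S → Tr.obj₃ ∈ S
  tensor_mem : ∀ {a : T}, a ∈ S → ∀ b : T, a ⊗ b ∈ S

/-- Swapping the last two factors. -/
def tswap {C : Type u} [Category.{v} C] [MonoidalCategory C] [BraidedCategory C]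
    (a b c : C) : (a ⊗ b) ⊗ c ≅ (a ⊗ c) ⊗ b :=
  α_ a b c ≪≫ whiskerLeftIso a (β_ b c) ≪≫ (α_ a c b).symm

theorem tpow_mem_of_le {I : Set T} (hI : IsTensorIdeal I) (a : T) {m n : ℕ} (h : m ≤ n)
    (hm : tpow a m ∈ I) : tpow a n ∈ I := by
  induction n, h using Nat.le_induction with
  | base => exact hm
  | succ n _ ih => exact hI.tensor_mem ih a

theorem mixed_mem (I : Set T) (hI : IsTensorIdeal I)
    (Tr : Triangle T) (hTr : Tr ∈ distinguishedTriangles)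
    (p q : ℕ) (hp : 1 ≤ p) (hq : 1 ≤ q)
    (hx : tpow Tr.obj₁ p ∈ I) (hy : tpow Tr.obj₂ q ∈ I) (c : ℕ) :
    ∀ a b : ℕ, a + b + c = p + q - 1 →
      (tpow Tr.obj₁ a ⊗ tpow Tr.obj₂ b) ⊗ tpow Tr.obj₃ c ∈ I := by
  induction c with
  | zero =>
    intro a b h
    apply hI.tensor_mem
    by_cases ha : p ≤ a
    · exact hI.tensor_mem (tpow_mem_of_le hI _ ha hx) _
    · have hb : q ≤ b := by omega
      exact hI.mem_of_iso (β_ _ _) (hI.tensor_mem (tpow_mem_of_le hI _ hb hy) _)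
  | succ c ih =>
    intro a b h
    refine hI.mem_of_iso (α_ _ _ (Tr.obj₃)) ?_
    refine hI.cone_mem _ ((tensorLeft
      ((tpow Tr.obj₁ a ⊗ tpow Tr.obj₂ b) ⊗ tpow Tr.obj₃ c)).map_distinguished Tr hTr) ?_ ?_
    · refine hI.mem_of_iso ?_ (ih (a + 1) b (by omega))
      exact (tswap _ _ _ ≪≫ whiskerRightIso (tswap _ _ _) _).symm
    · refine hI.mem_of_iso ?_ (ih a (b + 1) (by omega))
      exact (tswap _ _ _ ≪≫ whiskerRightIso (α_ _ _ _) _).symm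

/-- Theorem: if `I` is a tensor ideal and `x → y → z → Σx` is a distinguished
triangle with `x^⊗p ∈ I` and `y^⊗q ∈ I` (`p, q ≥ 1`), then `z^⊗(p+q−1) ∈ I`. -/
theorem tpow_cone_mem_tensorIdeal (I : Set T) (hI : IsTensorIdeal I)
    (Tr : Triangle T) (hTr : Tr ∈ distinguishedTriangles)
    (p q : ℕ) (hp : 1 ≤ p) (hq : 1 ≤ q)
    (hx : tpow Tr.obj₁ p ∈ I) (hy : tpow Tr.obj₂ q ∈ I) :
    tpow Tr.obj₃ (p + q - 1) ∈ I := by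
  refine hI.mem_of_iso ?_ (mixed_mem I hI Tr hTr p q hp hq hx hy (p + q - 1) 0 0 (by omega))
  exact whiskerRightIso (λ_ (𝟙_ T)) _ ≪≫ λ_ _

end TT
end
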